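/- Let g : ℝ → (0, ∞) be a C² and π-periodic function satisfying 2g'(θ)² + g(θ)² − g(θ)g''(θ) > 0 for all θ. Then the function ‖·‖_g on ℝ², defined by ‖v‖_g = r/g(θ) where v = (r cos θ, r sin θ) with r ≥ 0 (and ‖0‖_g = 0), is a norm on ℝ². -/

import Mathlib

/-!
On the unit circle the function `N` is `h = 1 / g`, and the curvature expression
`2 g' ^ 2 + g ^ 2 - g g''` equals `g ^ 3 (h'' + h)`, so `h'' + h ≥ 0`. Sturm comparison then
shows that `h` lies above the solution of `u'' + u = 0` tangent to it at any angle `φ`, over the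
whole circle. Solutions of `u'' + u = 0` are the restrictions to the circle of linear functionals,
so `N` has a supporting linear functional at every point, and hence is subadditive.
-/

section PolarCoordinates

theorem exists_polar (v : ℝ × ℝ) :
    ∃ r θ : ℝ, 0 ≤ r ∧ (r * Real.cos θ, r * Real.sin θ) = v :=
  let z : ℂ := ⟨v.1, v.2⟩
  ⟨‖z‖, z.arg, norm_nonneg z, Prod.ext (Complex.norm_mul_cos_arg z) (Complex.norm_mul_sin_arg z)⟩

theorem exists_polar_abs_sub_le_pi (φ : ℝ) (v : ℝ × ℝ) :
    ∃ r θ : ℝ, 0 ≤ r ∧ |θ - φ| ≤ Real.pi ∧ (r * Real.cos θ, r * Real.sin θ) = v := by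
  obtain ⟨r, θ, hr, rfl⟩ := exists_polar v
  have hmem := toIocMod_mem_Ioc Real.two_pi_pos (φ - Real.pi) θ
  refine ⟨r, toIocMod Real.two_pi_pos (φ - Real.pi) θ, hr, ?_, ?_⟩
  · exact abs_le.2 ⟨by linarith [hmem.1], by linarith [hmem.2]⟩
  · rw [toIocMod, Real.cos_periodic.sub_zsmul_eq, Real.sin_periodic.sub_zsmul_eq]

theorem polar_eq_zero_iff {r θ : ℝ} : (r * Real.cos θ, r * Real.sin θ) = 0 ↔ r = 0 := by
  refine ⟨fun h => ?_, fun h => by simp [h]⟩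
  obtain ⟨hcos, hsin⟩ := Prod.mk_eq_zero.1 h
  linear_combination Real.cos θ * hcos + Real.sin θ * hsin - r * Real.sin_sq_add_cos_sq θ

end PolarCoordinates

section TrigConvex

/-- The sinusoid `u` with `u φ = a` and `u' φ = b`, i.e. the solution of `u'' + u = 0` with these
initial values. -/
noncomputable def sinusoid (a b φ θ : ℝ) : ℝ :=
  a * Real.cos (θ - φ) + b * Real.sin (θ - φ)

theorem sinusoid_self (a b θ : ℝ) : sinusoid a b θ θ = a := by
  simp [sinusoid]

theorem exists_linearMap_polar_eq_mul_sinusoid (a b φ : ℝ) :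
    ∃ ℓ : ℝ × ℝ →ₗ[ℝ] ℝ,
      ∀ r θ : ℝ, ℓ (r * Real.cos θ, r * Real.sin θ) = r * sinusoid a b φ θ := by
  refine ⟨(a * Real.cos φ - b * Real.sin φ) • LinearMap.fst ℝ ℝ ℝ
    + (a * Real.sin φ + b * Real.cos φ) • LinearMap.snd ℝ ℝ ℝ, fun r θ => ?_⟩
  simp only [LinearMap.add_apply, LinearMap.smul_apply, LinearMap.fst_apply, LinearMap.snd_apply,
    smul_eq_mul, sinusoid, Real.cos_sub, Real.sin_sub]
  ring

/-- Trigonometric convexity of a function of the angle: at every `φ` the graph of `h` has a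
supporting sinusoid. The support is only required within `π` of `φ`, which covers the whole
circle; `h` itself need not be periodic. -/
def TrigConvex (h : ℝ → ℝ) : Prop :=
  ∀ φ, ∃ m, ∀ θ, |θ - φ| ≤ Real.pi → sinusoid (h φ) m φ θ ≤ h θ

theorem hasDerivAt_sinusoid_tangent {h h' : ℝ → ℝ} {h'' s : ℝ} (hh : HasDerivAt h (h' s) s)
    (hh' : HasDerivAt h' h'' s) (θ : ℝ) :
    HasDerivAt (fun t => sinusoid (h t) (h' t) t θ) ((h'' + h s) * Real.sin (θ - s)) s := by
  have hsub : HasDerivAt (fun t => θ - t) (-1) s := (hasDerivAt_id s).const_sub θ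
  refine ((hh.mul hsub.cos).add (hh'.mul hsub.sin)).congr_deriv ?_
  ring

theorem sinusoid_tangent_le {h h' h'' : ℝ → ℝ} (hh : ∀ x, HasDerivAt h (h' x) x)
    (hh' : ∀ x, HasDerivAt h' (h'' x) x) (hnonneg : ∀ x, 0 ≤ h'' x + h x) {φ θ : ℝ}
    (hθ : |θ - φ| ≤ Real.pi) : sinusoid (h φ) (h' φ) φ θ ≤ h θ := by
  -- Move the point of tangency rather than `θ`: the value at `θ` of the sinusoid tangent at `s`
  -- increases to `h θ` as `s` approaches `θ` from either side.
  have hderiv := fun s => hasDerivAt_sinusoid_tangent (hh s) (hh' s) θ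
  have hcont : Continuous fun s => sinusoid (h s) (h' s) s θ :=
    continuous_iff_continuousAt.2 fun s => (hderiv s).continuousAt
  obtain ⟨hlower, hupper⟩ := abs_le.1 hθ
  rw [← sinusoid_self (h θ) (h' θ) θ]
  rcases le_total φ θ with hle | hle
  · refine monotoneOn_of_hasDerivWithinAt_nonneg (convex_Icc φ θ) hcont.continuousOn
      (fun s _ => (hderiv s).hasDerivWithinAt) (fun s hs => ?_)
      (Set.left_mem_Icc.2 hle) (Set.right_mem_Icc.2 hle) hle
    obtain ⟨hφs, hsθ⟩ := interior_subset hs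
    exact mul_nonneg (hnonneg s)
      (Real.sin_nonneg_of_nonneg_of_le_pi (by linarith) (by linarith))
  · refine antitoneOn_of_hasDerivWithinAt_nonpos (convex_Icc θ φ) hcont.continuousOn
      (fun s _ => (hderiv s).hasDerivWithinAt) (fun s hs => ?_)
      (Set.left_mem_Icc.2 hle) (Set.right_mem_Icc.2 hle) hle
    obtain ⟨hθs, hsφ⟩ := interior_subset hs
    exact mul_nonpos_of_nonneg_of_nonpos (hnonneg s)
      (Real.sin_nonpos_of_nonpos_of_neg_pi_le (by linarith) (by linarith))

theorem trigConvex_of_add_nonneg {h h' h'' : ℝ → ℝ} (hh : ∀ x, HasDerivAt h (h' x) x)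
    (hh' : ∀ x, HasDerivAt h' (h'' x) x) (hnonneg : ∀ x, 0 ≤ h'' x + h x) : TrigConvex h :=
  fun φ => ⟨h' φ, fun _ => sinusoid_tangent_le hh hh' hnonneg⟩

theorem hasDerivAt_neg_div_sq {g g' : ℝ → ℝ} {g'' x : ℝ} (hg : HasDerivAt g (g' x) x)
    (hg' : HasDerivAt g' g'' x) (hx : g x ≠ 0) :
    HasDerivAt (fun y => -g' y / g y ^ 2) ((2 * g' x ^ 2 - g x * g'') / g x ^ 3) x := by
  refine (hg'.fun_neg.fun_div (hg.fun_pow 2) (pow_ne_zero 2 hx)).congr_deriv ?_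
  field_simp
  ring

theorem trigConvex_inv {g g' g'' : ℝ → ℝ} (hpos : ∀ x, 0 < g x)
    (hg : ∀ x, HasDerivAt g (g' x) x) (hg' : ∀ x, HasDerivAt g' (g'' x) x)
    (hcurv : ∀ x, 0 ≤ 2 * g' x ^ 2 + g x ^ 2 - g x * g'' x) :
    TrigConvex fun x => (g x)⁻¹ := by
  refine trigConvex_of_add_nonneg (fun x => (hg x).fun_inv (hpos x).ne')
    (fun x => hasDerivAt_neg_div_sq (hg x) (hg' x) (hpos x).ne') fun x => ?_
  have hx := hpos x
  calc 0 ≤ (2 * g' x ^ 2 + g x ^ 2 - g x * g'' x) / g x ^ 3 :=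
        div_nonneg (hcurv x) (pow_pos hx 3).le
    _ = (2 * g' x ^ 2 - g x * g'' x) / g x ^ 3 + (g x)⁻¹ := by
        field_simp
        ring

end TrigConvex

theorem map_add_le_of_forall_exists_supporting {E M : Type*} [AddZeroClass E] [AddCommMonoid M]
    [Preorder M] [AddLeftMono M] {N : E → M}
    (hN : ∀ u, ∃ ℓ : E →+ M, ℓ u = N u ∧ ∀ v, ℓ v ≤ N v) (v w : E) :
    N (v + w) ≤ N v + N w := by
  obtain ⟨ℓ, heq, hle⟩ := hN (v + w)
  calc N (v + w) = ℓ v + ℓ w := by rw [← heq, map_add]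
    _ ≤ N v + N w := add_le_add (hle v) (hle w)

/-- `N` is the positively homogeneous function on the plane whose value at the point of the unit
circle with angle `θ` is `h θ`. -/
def IsPolarExtension (N : ℝ × ℝ → ℝ) (h : ℝ → ℝ) : Prop :=
  ∀ r θ : ℝ, 0 ≤ r → N (r * Real.cos θ, r * Real.sin θ) = r * h θ

namespace IsPolarExtension

variable {N : ℝ × ℝ → ℝ} {h : ℝ → ℝ}

theorem eq_zero_iff (hN : IsPolarExtension N h) (hne : ∀ θ, h θ ≠ 0) (v : ℝ × ℝ) :
    N v = 0 ↔ v = 0 := by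
  obtain ⟨r, θ, hr, rfl⟩ := exists_polar v
  rw [hN r θ hr, polar_eq_zero_iff, mul_eq_zero_iff_right (hne θ)]

theorem map_smul_of_nonneg (hN : IsPolarExtension N h) {c : ℝ} (hc : 0 ≤ c) (v : ℝ × ℝ) :
    N (c • v) = c * N v := by
  obtain ⟨r, θ, hr, rfl⟩ := exists_polar v
  rw [Prod.smul_mk, smul_eq_mul, smul_eq_mul, ← mul_assoc, ← mul_assoc,
    hN _ θ (mul_nonneg hc hr), hN r θ hr, mul_assoc]

theorem map_neg (hN : IsPolarExtension N h) (hper : Function.Periodic h Real.pi) (v : ℝ × ℝ) :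
    N (-v) = N v := by
  obtain ⟨r, θ, hr, rfl⟩ := exists_polar v
  have hneg : -(r * Real.cos θ, r * Real.sin θ)
      = (r * Real.cos (θ + Real.pi), r * Real.sin (θ + Real.pi)) := by
    simp
  rw [hneg, hN r _ hr, hN r θ hr, hper θ]

theorem map_smul (hN : IsPolarExtension N h) (hper : Function.Periodic h Real.pi) (c : ℝ)
    (v : ℝ × ℝ) : N (c • v) = |c| * N v := by
  rw [← hN.map_smul_of_nonneg (abs_nonneg c)]
  rcases abs_choice c with hc | hc
  · rw [hc]
  · rw [hc, neg_smul, hN.map_neg hper]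

theorem exists_supporting_linearMap (hN : IsPolarExtension N h) (hconv : TrigConvex h)
    (u : ℝ × ℝ) : ∃ ℓ : ℝ × ℝ →ₗ[ℝ] ℝ, ℓ u = N u ∧ ∀ v, ℓ v ≤ N v := by
  obtain ⟨ρ, φ, hρ, rfl⟩ := exists_polar u
  obtain ⟨m, hm⟩ := hconv φ
  obtain ⟨ℓ, hℓ⟩ := exists_linearMap_polar_eq_mul_sinusoid (h φ) m φ
  refine ⟨ℓ, by rw [hℓ, sinusoid_self, hN ρ φ hρ], fun v => ?_⟩
  obtain ⟨r, θ, hr, hθ, rfl⟩ := exists_polar_abs_sub_le_pi φ v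
  rw [hℓ, hN r θ hr]
  exact mul_le_mul_of_nonneg_left (hm θ hθ) hr

theorem map_add_le (hN : IsPolarExtension N h) (hconv : TrigConvex h) (v w : ℝ × ℝ) :
    N (v + w) ≤ N v + N w :=
  map_add_le_of_forall_exists_supporting (fun u =>
    let ⟨ℓ, hℓ⟩ := hN.exists_supporting_linearMap hconv u
    ⟨ℓ.toAddMonoidHom, hℓ⟩) v w

end IsPolarExtension

theorem stmt18_general (g : ℝ → ℝ) (hgpos : ∀ θ, 0 < g θ) (hg : Differentiable ℝ g)
    (hg' : Differentiable ℝ (deriv g)) (hper : Function.Periodic g Real.pi)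
    (hcurv : ∀ θ, 0 ≤ 2 * deriv g θ ^ 2 + g θ ^ 2 - g θ * deriv (deriv g) θ)
    (N : ℝ × ℝ → ℝ)
    (hNpolar : ∀ r θ : ℝ, 0 ≤ r → N (r * Real.cos θ, r * Real.sin θ) = r / g θ) :
    (∀ v : ℝ × ℝ, N v = 0 ↔ v = 0) ∧
    (∀ (c : ℝ) (v : ℝ × ℝ), N (c • v) = |c| * N v) ∧
    (∀ v w : ℝ × ℝ, N (v + w) ≤ N v + N w) := by
  have hN : IsPolarExtension N fun θ => (g θ)⁻¹ := fun r θ hr => by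
    rw [hNpolar r θ hr, div_eq_mul_inv]
  have hconv : TrigConvex fun θ => (g θ)⁻¹ :=
    trigConvex_inv hgpos (fun x => (hg x).hasDerivAt) (fun x => (hg' x).hasDerivAt) hcurv
  exact ⟨hN.eq_zero_iff fun θ => inv_ne_zero (hgpos θ).ne', hN.map_smul (hper.comp (·⁻¹)),
    hN.map_add_le hconv⟩

/-- Let `g : ℝ → (0,∞)` be `C²`, `π`-periodic, with `2g'² + g² − g·g'' > 0`. Then the
function `N` on `ℝ²` determined in polar coordinates by `N(r cos θ, r sin θ) = r / g θ`
(for `r ≥ 0`) is a norm. -/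
theorem stmt18 (g : ℝ → ℝ) (hgpos : ∀ θ, 0 < g θ) (hg : ContDiff ℝ 2 g)
    (hper : ∀ θ, g (θ + Real.pi) = g θ)
    (hcurv : ∀ θ, 0 < 2 * deriv g θ ^ 2 + g θ ^ 2 - g θ * deriv (deriv g) θ)
    (N : ℝ × ℝ → ℝ)
    (hNpolar : ∀ r θ : ℝ, 0 ≤ r → N (r * Real.cos θ, r * Real.sin θ) = r / g θ) :
    (∀ v : ℝ × ℝ, N v = 0 ↔ v = 0) ∧
    (∀ (c : ℝ) (v : ℝ × ℝ), N (c • v) = |c| * N v) ∧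
    (∀ v w : ℝ × ℝ, N (v + w) ≤ N v + N w) := by
  exact stmt18_general g hgpos (hg.differentiable two_ne_zero) hg.differentiable_deriv_two hper
    (fun θ => (hcurv θ).le) N hNpolar
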